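/- arXiv:1507.03350 — 2 statements merged into one kernel-verified Lean document; each statement's English description precedes it below -/
import Mathlib

section
/- Two Hermitian matrices H₁, H₂ in End(V₁ ⊗ ⋯ ⊗ Vₙ) are in the same orbit under conjugation by the local general linear group GL_d = GL(V₁) × ⋯ × GL(Vₙ) (acting via g = g₁ ⊗ ⋯ ⊗ gₙ, H ↦ gHg⁻¹) if and only if they are in the same orbit under conjugation by the local unitary group U_d = U(V₁) × ⋯ × U(Vₙ). -/
/-- The Kronecker (tensor) product `g₁ ⊗ ⋯ ⊗ gₙ` of local matrices, acting on
`V = V₁ ⊗ ⋯ ⊗ Vₙ` with basis indexed by `∀ i, Fin (d i)`. -/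
noncomputable def kron {n : ℕ} {d : Fin n → ℕ}
    (g : ∀ i, Matrix (Fin (d i)) (Fin (d i)) ℂ) :
    Matrix (∀ i, Fin (d i)) (∀ i, Fin (d i)) ℂ :=
  fun a b => ∏ i, g i (a i) (b i)

/-!
Write `x = u * |x|` for the polar decomposition of an invertible element. If `f` is a unital
multiplicative `*`-map, then `f |x| = |f x|`, since both are positive square roots of
`star (f x) * f x`. When `f x` intertwines normal elements `a` and `b`, it also intertwines
`star a` and `star b` (Fuglede–Putnam–Rosenblum), hence `star (f x) * f x` commutes with `a`, and
so does `f |x|`. Cancelling the invertible factor `f |x|` shows that `f u` intertwines `a` and `b`.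
The Kronecker product is such a map `f` on families of matrices.
-/

section NonUnitalCStarAlgebra

variable {A B F : Type*} [NonUnitalCStarAlgebra A] [PartialOrder A] [StarOrderedRing A]
  [NonUnitalCStarAlgebra B] [PartialOrder B] [StarOrderedRing B] [FunLike F A B]

lemma map_nonneg_of_mulHom_starHom [MulHomClass F A B] [StarHomClass F A B] (f : F) {x : A}
    (hx : 0 ≤ x) : 0 ≤ f x := by
  obtain ⟨y, rfl⟩ := CStarAlgebra.nonneg_iff_eq_star_mul_self.mp hx
  rw [map_mul, map_star]
  exact star_mul_self_nonneg (f y)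

lemma map_cfcAbs [MulHomClass F A B] [StarHomClass F A B] (f : F) (x : A) :
    f (CFC.abs x) = CFC.abs (f x) := by
  have map_abs_mul_self : f (CFC.abs x) * f (CFC.abs x) = star (f x) * f x := by
    rw [← map_mul, CFC.abs_mul_abs, map_mul, map_star]
  exact (CFC.sqrt_unique map_abs_mul_self
    (map_nonneg_of_mulHom_starHom f (CFC.abs_nonneg x))).symm

lemma commute_cfcAbs_of_semiconjBy {x a b : A} (ha : IsStarNormal a) (hb : IsStarNormal b)
    (h : SemiconjBy x a b) : Commute (CFC.abs x) a := by
  have h_star : SemiconjBy (star x) b a := by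
    simpa only [SemiconjBy, star_mul, star_star] using (congrArg star (h.star_right ha hb)).symm
  have h_sq : Commute (star x * x) a := h_star.mul_left h
  exact h_sq.cfcₙ_nnreal _

end NonUnitalCStarAlgebra

section CStarAlgebra

variable {A B F : Type*} [CStarAlgebra A] [PartialOrder A] [StarOrderedRing A]
  [CStarAlgebra B] [PartialOrder B] [StarOrderedRing B] [FunLike F A B]

lemma isUnit_cfcAbs {x : A} (hx : IsUnit x) : IsUnit (CFC.abs x) :=
  (CFC.isUnit_sqrt_iff _ (star_mul_self_nonneg x)).mpr (hx.star.mul hx)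

lemma exists_mem_unitary_mul_cfcAbs_eq {x : A} (hx : IsUnit x) :
    ∃ u ∈ unitary A, u * CFC.abs x = x := by
  obtain ⟨x, rfl⟩ := hx
  obtain ⟨p, hp⟩ := isUnit_cfcAbs x.isUnit
  have star_mul_self_eq : star (x : A) * x = star (p : A) * p := by
    rw [hp, (CFC.abs_nonneg (x : A)).isSelfAdjoint.star_eq, CFC.abs_mul_abs]
  refine ⟨x * ↑p⁻¹, (Units.mul_inv_mem_unitary x p).mpr (Units.ext star_mul_self_eq), ?_⟩
  rw [← hp, Units.inv_mul_cancel_right]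

lemma exists_mem_unitary_semiconjBy_map [MonoidHomClass F A B] [StarHomClass F A B] (f : F)
    {x : A} {a b : B} (hx : IsUnit x) (ha : IsStarNormal a) (hb : IsStarNormal b)
    (h : SemiconjBy (f x) a b) : ∃ u ∈ unitary A, SemiconjBy (f u) a b := by
  obtain ⟨u, hu, hux⟩ := exists_mem_unitary_mul_cfcAbs_eq hx
  have polar : f x = f u * f (CFC.abs x) := by rw [← map_mul, hux]
  have abs_commute : Commute (f (CFC.abs x)) a := by
    rw [map_cfcAbs]
    exact commute_cfcAbs_of_semiconjBy ha hb h
  refine ⟨u, hu, ((isUnit_cfcAbs hx).map f).mul_right_cancel ?_⟩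
  calc f u * a * f (CFC.abs x) = f x * a := by
        rw [mul_assoc, ← abs_commute.eq, ← mul_assoc, ← polar]
    _ = b * f u * f (CFC.abs x) := by rw [h.eq, polar, mul_assoc]

end CStarAlgebra

lemma mem_unitary_pi_iff {ι : Type*} {R : ι → Type*} [∀ i, Monoid (R i)] [∀ i, StarMul (R i)]
    {u : ∀ i, R i} : u ∈ unitary (∀ i, R i) ↔ ∀ i, u i ∈ unitary (R i) := by
  simp only [Unitary.mem_iff, funext_iff, ← forall_and, Pi.mul_apply, Pi.star_apply, Pi.one_apply]

lemma matrix_conj_eq_iff_semiconjBy {m R : Type*} [Fintype m] [DecidableEq m] [CommRing R]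
    {X H K : Matrix m m R} (hX : IsUnit X) : X * H * X⁻¹ = K ↔ SemiconjBy X H K := by
  let := hX.invertible
  exact Matrix.mul_inv_eq_iff_eq_mul_of_invertible X (X * H) K

section Kronecker

variable {n : ℕ} {d : Fin n → ℕ} (g h : ∀ i, Matrix (Fin (d i)) (Fin (d i)) ℂ)

lemma kron_mul : kron (g * h) = kron g * kron h := by
  ext a b
  simp only [kron, Pi.mul_apply, Matrix.mul_apply, Finset.prod_univ_sum, Fintype.piFinset_univ,
    Finset.prod_mul_distrib]

lemma kron_one : kron (1 : ∀ i, Matrix (Fin (d i)) (Fin (d i)) ℂ) = 1 := by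
  ext a b
  simp only [kron, Pi.one_apply, Matrix.one_apply, Fintype.prod_ite_zero, Finset.prod_const_one,
    funext_iff]

lemma kron_star : kron (star g) = star (kron g) := by
  ext a b
  simp only [kron, Pi.star_apply, Matrix.star_apply, star_prod]

/-- The Kronecker product as a unital multiplicative `*`-map on the product of the local matrix
algebras; it is multilinear rather than additive, so it is not a `*`-algebra homomorphism. -/
noncomputable def kronHom (d : Fin n → ℕ) :
    (∀ i, Matrix (Fin (d i)) (Fin (d i)) ℂ) →⋆*
      Matrix (∀ i, Fin (d i)) (∀ i, Fin (d i)) ℂ where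
  toFun := kron
  map_one' := kron_one
  map_mul' := kron_mul
  map_star' := kron_star

variable {g}

lemma isUnit_kron (hg : IsUnit g) : IsUnit (kron g) :=
  hg.map (kronHom d)

open scoped MatrixOrder Matrix.Norms.L2Operator in
lemma exists_mem_unitary_semiconjBy_kron {H₁ H₂ : Matrix (∀ i, Fin (d i)) (∀ i, Fin (d i)) ℂ}
    (hg : IsUnit g) (h₁ : IsStarNormal H₁) (h₂ : IsStarNormal H₂)
    (h : SemiconjBy (kron g) H₁ H₂) :
    ∃ u ∈ unitary (∀ i, Matrix (Fin (d i)) (Fin (d i)) ℂ), SemiconjBy (kron u) H₁ H₂ :=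
  exists_mem_unitary_semiconjBy_map (kronHom d) hg h₁ h₂ h

end Kronecker

theorem stmt_2_general {n : ℕ} (d : Fin n → ℕ)
    (H₁ H₂ : Matrix (∀ i, Fin (d i)) (∀ i, Fin (d i)) ℂ)
    (h1 : IsStarNormal H₁) (h2 : IsStarNormal H₂) :
    (∃ g : ∀ i, Matrix (Fin (d i)) (Fin (d i)) ℂ, (∀ i, IsUnit (g i)) ∧
      kron g * H₁ * (kron g)⁻¹ = H₂) ↔
    (∃ u : ∀ i, Matrix (Fin (d i)) (Fin (d i)) ℂ,
      (∀ i, u i ∈ Matrix.unitaryGroup (Fin (d i)) ℂ) ∧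
      kron u * H₁ * (kron u)⁻¹ = H₂) := by
  simp only [← Pi.isUnit_iff, ← mem_unitary_pi_iff]
  constructor
  · rintro ⟨g, hg, hH⟩
    have hgH : SemiconjBy (kron g) H₁ H₂ := (matrix_conj_eq_iff_semiconjBy (isUnit_kron hg)).mp hH
    obtain ⟨u, hu, huH⟩ := exists_mem_unitary_semiconjBy_kron hg h1 h2 hgH
    have u_isUnit : IsUnit u := Unitary.isUnit_coe (U := ⟨u, hu⟩)
    exact ⟨u, hu, (matrix_conj_eq_iff_semiconjBy (isUnit_kron u_isUnit)).mpr huH⟩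
  · rintro ⟨u, hu, hH⟩
    exact ⟨u, Unitary.isUnit_coe (U := ⟨u, hu⟩), hH⟩

/-- Two Hermitian matrices on `V₁ ⊗ ⋯ ⊗ Vₙ` are in the same orbit under
conjugation by the local general linear group `GL(V₁) × ⋯ × GL(Vₙ)` (acting via
`g₁ ⊗ ⋯ ⊗ gₙ`) iff they are in the same orbit under conjugation by the local unitary group. -/
theorem stmt_2 {n : ℕ} (d : Fin n → ℕ)
    (H₁ H₂ : Matrix (∀ i, Fin (d i)) (∀ i, Fin (d i)) ℂ)
    (h1 : H₁.IsHermitian) (h2 : H₂.IsHermitian) :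
    (∃ g : ∀ i, Matrix (Fin (d i)) (Fin (d i)) ℂ, (∀ i, IsUnit (g i)) ∧
      kron g * H₁ * (kron g)⁻¹ = H₂) ↔
    (∃ u : ∀ i, Matrix (Fin (d i)) (Fin (d i)) ℂ,
      (∀ i, u i ∈ Matrix.unitaryGroup (Fin (d i)) ℂ) ∧
      kron u * H₁ * (kron u)⁻¹ = H₂) := by
  exact stmt_2_general d H₁ H₂ h1.isSelfAdjoint.isStarNormal h2.isSelfAdjoint.isStarNormal
end

section
/- Two m-tuples of density operators (tuples of positive semidefinite Hermitian matrices of trace 1) on V₁⊗⋯⊗Vₙ are in the same local unitary orbit (simultaneous conjugation by u₁⊗⋯⊗uₙ with uᵢ unitary) if and only if all polynomial invariants of the local GL-conjugation action agree on them; equivalently, the trace monomials Tr^P_σ form a complete set of invariants for local unitary equivalence. -/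
open Matrix
open scoped ComplexOrder

/-- The trace monomial `Tr^P_σ` evaluated on the tuple `(M_{p₁},…,M_{p_ℓ})`:
the multilinear extension of `⊗ⱼMⱼ ↦ ∏ᵢ (product over cycles of σᵢ of traces)`. -/
noncomputable def trMonP {n m ℓ : ℕ} {d : Fin n → ℕ}
    (P : Fin ℓ → Fin m) (σ : Fin n → Equiv.Perm (Fin ℓ))
    (M : Fin m → Matrix (∀ i, Fin (d i)) (∀ i, Fin (d i)) ℂ) : ℂ :=
  ∑ a : Fin ℓ → ∀ i, Fin (d i), ∏ c, M (P c) (a c) (fun i => a (σ i c) i)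

/-!
The entries of `u⁻¹ M u`, as `u` runs over the compact group of local unitaries, have Haar moments
`∫ ∏_c (u⁻¹ M_{P c} u)_{s_c t_c} du = Tr (⨂_c M_{P c} · W)`, where the averaged operator
`W = ∫ u^{⊗ℓ} E u^{-⊗ℓ} du` commutes with every `u^{⊗ℓ}`. By Schur–Weyl duality for products of
unitary groups, `W` is a combination of local permutations, so all these moments are determined by
the trace monomials. Conjugation by unitaries preserves hermiticity, hence complex conjugation only
permutes the entries along an orbit, and polynomials are dense in the continuous functions on the
union of the orbits of `M` and `N` by Stone–Weierstrass. Equal trace monomials thus make the two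
orbit measures equal, whereas disjoint compact orbits would be told apart by a Urysohn function.

The duality passes from unitaries to generic matrices because a polynomial vanishing on all local
unitaries is zero: as a function of the eigenvalues for fixed eigenvectors it vanishes on a torus,
hence at all Hermitian matrices, and along `H + t K` with `H`, `K` Hermitian it vanishes at all real
`t`, hence at `t = i`. A matrix commuting with the generic `X^{⊗ℓ}` commutes with every matrix
obtained from it by a linear functional on polynomials, and those include the whole centralizer of
the local permutations. The double centralizer theorem concludes.
-/

section PiKronecker

variable {ι R : Type*} [Fintype ι] [CommSemiring R] {J : ι → Type*}

/-- The Kronecker product `⨂ᵢ gᵢ` of a family of square matrices; its rows and columns are indexed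
by the product of the individual index types. -/
def piKronecker (g : ∀ i, Matrix (J i) (J i) R) : Matrix (∀ i, J i) (∀ i, J i) R :=
  of fun a b => ∏ i, g i (a i) (b i)

theorem piKronecker_apply (g : ∀ i, Matrix (J i) (J i) R) (a b : ∀ i, J i) :
    piKronecker g a b = ∏ i, g i (a i) (b i) := rfl

theorem piKronecker_conjTranspose [StarRing R] (g : ∀ i, Matrix (J i) (J i) R) :
    (piKronecker g)ᴴ = piKronecker fun i => (g i)ᴴ := by
  ext a b
  simp [piKronecker_apply, star_prod]

theorem piKronecker_map {S : Type*} [CommSemiring S] (f : R →+* S)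
    (g : ∀ i, Matrix (J i) (J i) R) :
    (piKronecker g).map f = piKronecker fun i => (g i).map f := by
  ext a b
  simp [piKronecker_apply, map_prod]

theorem piKronecker_one [∀ i, DecidableEq (J i)] :
    piKronecker (1 : ∀ i, Matrix (J i) (J i) R) = 1 := by
  ext a b
  simp [piKronecker_apply, one_apply, Finset.prod_ite_zero, funext_iff]

theorem piKronecker_mul [DecidableEq ι] [∀ i, Fintype (J i)] (g h : ∀ i, Matrix (J i) (J i) R) :
    piKronecker (g * h) = piKronecker g * piKronecker h := by
  ext a b
  simp only [piKronecker_apply, Pi.mul_apply, mul_apply, Finset.prod_univ_sum,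
    Fintype.piFinset_univ, Finset.prod_mul_distrib]

theorem continuous_piKronecker [TopologicalSpace R] [ContinuousMul R] :
    Continuous (piKronecker : (∀ i, Matrix (J i) (J i) R) → _) :=
  continuous_matrix fun a b => continuous_finsetProd _ fun i _ =>
    (continuous_apply i).matrix_elem (a i) (b i)

end PiKronecker

theorem piKronecker_inv {ι R : Type*} [Fintype ι] [DecidableEq ι] [CommRing R] {J : ι → Type*}
    [∀ i, Fintype (J i)] [∀ i, DecidableEq (J i)] {g : ∀ i, Matrix (J i) (J i) R}
    (hg : ∀ i, IsUnit (g i)) : (piKronecker g)⁻¹ = piKronecker fun i => (g i)⁻¹ := by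
  refine inv_eq_right_inv ?_
  rw [← piKronecker_mul, ← piKronecker_one]
  congr 1
  exact funext fun i => (g i).mul_nonsing_inv ((g i).isUnit_iff_isUnit_det.mp (hg i))

theorem piKronecker_mem_unitaryGroup {ι R : Type*} [Fintype ι] [DecidableEq ι] [CommRing R]
    [StarRing R] {J : ι → Type*} [∀ i, Fintype (J i)] [∀ i, DecidableEq (J i)]
    {u : ∀ i, Matrix (J i) (J i) R} (hu : ∀ i, u i ∈ unitaryGroup (J i) R) :
    piKronecker u ∈ unitaryGroup (∀ i, J i) R := by
  rw [mem_unitaryGroup_iff, star_eq_conjTranspose, piKronecker_conjTranspose, ← piKronecker_mul,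
    ← piKronecker_one]
  exact congrArg piKronecker (funext fun i => (hu i).2)

section LocalPerm

variable {ι : Type*} (L : Type*) (J : ι → Type*)

/-- The action of `∏ᵢ Perm L` on the basis of `L` copies of the composite system, where the `i`-th
permutation moves only the `i`-th tensor factors. -/
def localPerm : (ι → Equiv.Perm L) →* Equiv.Perm (L → ∀ i, J i) where
  toFun g :=
    { toFun a c i := a ((g i)⁻¹ c) i
      invFun a c i := a (g i c) i
      left_inv a := by simp
      right_inv a := by simp }
  map_one' := rfl
  map_mul' g h := by ext; simp

variable {L J} in
theorem localPerm_apply (g : ι → Equiv.Perm L) (a : L → ∀ i, J i) (c : L) (i : ι) :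
    localPerm L J g a c i = a ((g i)⁻¹ c) i := rfl

end LocalPerm

section LocalTensorPower

variable {ι L R : Type*} [Fintype ι] [DecidableEq ι] [Fintype L] [DecidableEq L] [CommSemiring R]
  {J : ι → Type*} [∀ i, Fintype (J i)] [∀ i, DecidableEq (J i)]

variable (L) in
/-- The representation `g ↦ (⨂ᵢ gᵢ)^{⊗L}` of tuples of local operators on `L` copies of the
composite system. -/
def localTensorPower :
    (∀ i, Matrix (J i) (J i) R) →* Matrix (L → ∀ i, J i) (L → ∀ i, J i) R where
  toFun g := piKronecker fun _ => piKronecker g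
  map_one' := by simp only [piKronecker_one]; exact piKronecker_one
  map_mul' g h := by simp only [piKronecker_mul]; exact piKronecker_mul _ _

theorem localTensorPower_apply (g : ∀ i, Matrix (J i) (J i) R) :
    localTensorPower L g = piKronecker fun _ => piKronecker g := rfl

theorem localTensorPower_map {S : Type*} [CommSemiring S] (f : R →+* S)
    (g : ∀ i, Matrix (J i) (J i) R) :
    (localTensorPower L g).map f = localTensorPower L fun i => (g i).map f := by
  simp only [localTensorPower_apply, piKronecker_map]

variable (L R J) in
/-- The representation of `∏ᵢ Perm L` by permutation matrices attached to `localPerm`; it plays the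
role of the symmetric group in Schur–Weyl duality. -/
def localPermMatrix : (ι → Equiv.Perm L) →* Matrix (L → ∀ i, J i) (L → ∀ i, J i) R :=
  permMatrixHom.comp (localPerm L J)

theorem localPermMatrix_mul (g : ι → Equiv.Perm L)
    (A : Matrix (L → ∀ i, J i) (L → ∀ i, J i) R) :
    localPermMatrix L R J g * A = A.submatrix (⇑(localPerm L J g)⁻¹) id :=
  PEquiv.toMatrix_toPEquiv_mul ..

theorem mul_localPermMatrix (g : ι → Equiv.Perm L)
    (A : Matrix (L → ∀ i, J i) (L → ∀ i, J i) R) :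
    A * localPermMatrix L R J g = A.submatrix id (localPerm L J g) :=
  PEquiv.mul_toMatrix_toPEquiv ..

theorem commute_localPermMatrix_iff {g : ι → Equiv.Perm L}
    {A : Matrix (L → ∀ i, J i) (L → ∀ i, J i) R} :
    Commute (localPermMatrix L R J g) A ↔
      ∀ a b, A (localPerm L J g a) (localPerm L J g b) = A a b := by
  rw [commute_iff_eq, localPermMatrix_mul, mul_localPermMatrix, ← Matrix.ext_iff]
  refine ⟨fun h a b => by simpa using (h (localPerm L J g a) b).symm, fun h a b => ?_⟩
  simpa using (h ((localPerm L J g)⁻¹ a) b).symm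

theorem commute_localPermMatrix_localTensorPower (g : ι → Equiv.Perm L)
    (u : ∀ i, Matrix (J i) (J i) R) :
    Commute (localPermMatrix L R J g) (localTensorPower L u) := by
  refine commute_localPermMatrix_iff.mpr fun a b => ?_
  simp only [localTensorPower_apply, piKronecker_apply, localPerm_apply]
  rw [Finset.prod_comm, Finset.prod_comm (s := Finset.univ (α := L))]
  exact Finset.prod_congr rfl fun i _ =>
    Equiv.prod_comp (g i)⁻¹ fun c => u i (a c i) (b c i)

end LocalTensorPower

section TraceMonomial

variable {ι κ L R : Type*} [Fintype ι] [DecidableEq ι] [Fintype L] [DecidableEq L]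
  {J : ι → Type*} [∀ i, Fintype (J i)]

/-- The trace monomial `Tr^P_σ`: the contraction of `⨂_c X_{P c}` in which the `i`-th column index
of the `c`-th factor is identified with the `i`-th row index of the `σᵢ(c)`-th factor. -/
def traceMonomial [CommSemiring R] (P : L → κ) (σ : ι → Equiv.Perm L)
    (X : κ → Matrix (∀ i, J i) (∀ i, J i) R) : R :=
  ∑ a : L → ∀ i, J i, ∏ c, X (P c) (a c) fun i => a (σ i c) i

theorem traceMonomial_eq_trace [∀ i, DecidableEq (J i)] [CommSemiring R] (P : L → κ)
    (σ : ι → Equiv.Perm L) (X : κ → Matrix (∀ i, J i) (∀ i, J i) R) :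
    traceMonomial P σ X =
      trace (piKronecker (fun c => X (P c)) * localPermMatrix L R J σ⁻¹) := by
  rw [mul_localPermMatrix]
  simp only [traceMonomial, trace, diag_apply, submatrix_apply, piKronecker_apply, id_eq]
  rfl

theorem traceMonomial_conj [∀ i, DecidableEq (J i)] [CommRing R] (P : L → κ)
    (σ : ι → Equiv.Perm L) {g : ∀ i, Matrix (J i) (J i) R} (hg : ∀ i, IsUnit (g i))
    (X : κ → Matrix (∀ i, J i) (∀ i, J i) R) :
    traceMonomial P σ (fun j => piKronecker g * X j * (piKronecker g)⁻¹) =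
      traceMonomial P σ X := by
  have hg' : (fun i => (g i)⁻¹) * g = 1 := funext fun i =>
    (g i).nonsing_inv_mul ((g i).isUnit_iff_isUnit_det.mp (hg i))
  have hsplit : piKronecker (fun c => piKronecker g * X (P c) * (piKronecker g)⁻¹) =
      localTensorPower L g * piKronecker (fun c => X (P c)) *
        localTensorPower L fun i => (g i)⁻¹ := by
    rw [piKronecker_inv hg, localTensorPower_apply, localTensorPower_apply, ← piKronecker_mul,
      ← piKronecker_mul]
    rfl
  rw [traceMonomial_eq_trace, traceMonomial_eq_trace, hsplit, mul_assoc,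
    ← (commute_localPermMatrix_localTensorPower _ _).eq, mul_assoc, trace_mul_comm, mul_assoc,
    mul_assoc, ← map_mul, hg', map_one, mul_one]

end TraceMonomial

section DoubleCentralizer

open MonoidAlgebra

theorem asAlgebraHom_mem_span_range {k G V : Type*} [CommSemiring k] [Monoid G] [AddCommMonoid V]
    [Module k V] (ρ : Representation k G V) (r : k[G]) :
    ρ.asAlgebraHom r ∈ Submodule.span k (Set.range ρ) := by
  induction r using MonoidAlgebra.induction_linear with
  | zero => simp
  | add r s hr hs => simpa using add_mem hr hs
  | single g c =>
    rw [ρ.asAlgebraHom_single]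
    exact Submodule.smul_mem _ c (Submodule.subset_span ⟨g, rfl⟩)

theorem end_mem_span_range_of_mem_centralizer_centralizer {k G V : Type*} [CommRing k]
    [Monoid G] [AddCommGroup V] [Module k V] [Module.Finite k V] (ρ : Representation k G V)
    [IsSemisimpleModule k[G] ρ.asModule] {A : Module.End k V}
    (hA : A ∈ Set.centralizer (Set.centralizer (Set.range ρ))) :
    A ∈ Submodule.span k (Set.range ρ) := by
  let A' : Module.End (Module.End k[G] ρ.asModule) ρ.asModule :=
    { A with
      map_smul' := fun φ v => by
        let φ' : Module.End k V := (φ.restrictScalars k : ρ.asModule →ₗ[k] ρ.asModule)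
        have hφ : φ' ∈ Set.centralizer (Set.range ρ) := by
          rintro _ ⟨g, rfl⟩
          have hsmul (w : ρ.asModule) : of k G g • w = ρ g (ρ.asModuleEquiv w) := by
            simpa using ρ.single_smul (1 : k) g w
          exact LinearMap.ext fun w => (hsmul (φ w)).symm.trans <|
            (φ.map_smul (of k G g) w).symm.trans (congrArg φ (hsmul w))
        exact (LinearMap.congr_fun (hA φ' hφ) v).symm }
  obtain ⟨s, hs⟩ := Module.Finite.fg_top (R := k) (M := V)
  obtain ⟨r, hr⟩ := jacobson_density A' s
  have hAr : A = ρ.asAlgebraHom r := LinearMap.ext_on hs fun v hv => hr v hv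
  exact hAr ▸ asAlgebraHom_mem_span_range ρ r

theorem matrix_mem_span_range_of_mem_centralizer_centralizer {k G T : Type*} [Field k] [Group G]
    [Finite G] [NeZero (Nat.card G : k)] [Fintype T] [DecidableEq T] (ρ : G →* Matrix T T k)
    {A : Matrix T T k} (hA : A ∈ Set.centralizer (Set.centralizer (Set.range ρ))) :
    A ∈ Submodule.span k (Set.range ρ) := by
  let e : Matrix T T k ≃ₐ[k] Module.End k (T → k) := toLinAlgEquiv'
  let ρ' : Representation k G (T → k) := (e : Matrix T T k →* Module.End k (T → k)).comp ρ
  have hrange : e.toLinearMap '' Set.range ρ = Set.range ρ' := (Set.range_comp e ρ).symm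
  have hA' : e A ∈ Set.centralizer (Set.centralizer (Set.range ρ')) := by
    intro φ hφ
    have : e.symm φ ∈ Set.centralizer (Set.range ρ) := by
      rintro _ ⟨g, rfl⟩
      rw [← e.injective.eq_iff, map_mul, map_mul, e.apply_symm_apply]
      exact hφ (ρ' g) ⟨g, rfl⟩
    simpa using congrArg e (hA _ this)
  have hspan := end_mem_span_range_of_mem_centralizer_centralizer ρ' hA'
  rw [← hrange, Submodule.span_image] at hspan
  obtain ⟨B, hB, hBA⟩ := hspan
  exact e.injective hBA ▸ hB

end DoubleCentralizer

section HaarAveraging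

open MeasureTheory

theorem commute_integral_conj {G 𝒜 : Type*} [Group G] [TopologicalSpace G]
    [IsTopologicalGroup G] [CompactSpace G] [MeasurableSpace G] [BorelSpace G]
    [NormedRing 𝒜] [NormedAlgebra ℝ 𝒜] {μ : Measure G} [IsFiniteMeasure μ]
    [μ.IsMulLeftInvariant] {ρ : G →* 𝒜} (hρ : Continuous ρ) (X : 𝒜) (v : G) :
    Commute (ρ v) (∫ u, ρ u * X * ρ u⁻¹ ∂μ) := by
  have hint : Integrable (fun u => ρ u * X * ρ u⁻¹) μ :=
    Continuous.integrable_of_hasCompactSupport (by fun_prop) (.of_compactSpace _)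
  have hshift (u : G) : ρ v * (ρ u * X * ρ u⁻¹) = ρ (v * u) * X * ρ (v * u)⁻¹ * ρ v := by
    simp only [_root_.mul_inv_rev, map_mul, mul_assoc, ← map_mul ρ v⁻¹ v, inv_mul_cancel, map_one,
      mul_one]
  calc ρ v * ∫ u, ρ u * X * ρ u⁻¹ ∂μ
      = ∫ u, ρ (v * u) * X * ρ (v * u)⁻¹ * ρ v ∂μ := by
        rw [← integral_const_mul_of_integrable hint]
        exact integral_congr_ae (.of_forall hshift)
    _ = ∫ u, ρ u * X * ρ u⁻¹ * ρ v ∂μ :=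
        integral_mul_left_eq_self (fun u => ρ u * X * ρ u⁻¹ * ρ v) v
    _ = (∫ u, ρ u * X * ρ u⁻¹ ∂μ) * ρ v := integral_mul_const_of_integrable hint

end HaarAveraging

section Moments

open MeasureTheory

theorem continuous_integral_continuousMap {G E : Type*} [TopologicalSpace G] [CompactSpace G]
    [MeasurableSpace G] [BorelSpace G] [NormedAddCommGroup E] [NormedSpace ℝ E]
    [SecondCountableTopologyEither G E] (μ : Measure G) [IsFiniteMeasure μ] :
    Continuous fun f : C(G, E) => ∫ u, f u ∂μ :=
  ((continuous_integral (μ := μ)).comp (ContinuousMap.toLp (E := E) 1 μ ℝ).continuous).congr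
    fun f => integral_congr_ae (ContinuousMap.coeFn_toLp μ f)

open MvPolynomial

theorem denseRange_aeval_of_separatesPoints {S σ 𝕜 : Type*} [TopologicalSpace S] [CompactSpace S]
    [RCLike 𝕜] {c : σ → C(S, 𝕜)} (hstar : ∀ p, star (c p) ∈ Set.range c)
    (hsep : ∀ x y, (∀ p, c p x = c p y) → x = y) :
    DenseRange (aeval c : MvPolynomial σ 𝕜 → C(S, 𝕜)) := by
  have hadjoin : (StarAlgebra.adjoin 𝕜 (Set.range c)).toSubalgebra = (aeval c).range := by
    rw [StarAlgebra.adjoin_toSubalgebra, Set.union_eq_self_of_subset_right,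
      Algebra.adjoin_range_eq_range_aeval]
    rintro f ⟨p, hp⟩
    simpa [hp] using hstar p
  have htop := ContinuousMap.starSubalgebra_topologicalClosure_eq_top_of_separatesPoints
    (StarAlgebra.adjoin 𝕜 (Set.range c)) fun x y hxy => by
      contrapose! hxy
      exact hsep x y fun p => hxy _ ⟨c p, StarAlgebra.subset_adjoin _ _ ⟨p, rfl⟩, rfl⟩
  have hrange : Set.range (aeval c : MvPolynomial σ 𝕜 → C(S, 𝕜)) =
      StarAlgebra.adjoin 𝕜 (Set.range c) :=
    congrArg (fun A : Subalgebra 𝕜 C(S, 𝕜) => (A : Set C(S, 𝕜))) hadjoin.symm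
  rw [DenseRange, hrange, dense_iff_closure_eq, ← StarSubalgebra.topologicalClosure_coe, htop,
    StarSubalgebra.coe_top]

variable {G : Type*} [TopologicalSpace G] [CompactSpace G] [MeasurableSpace G]

theorem exists_apply_eq_of_integral_comp_eq {S : Type*} [TopologicalSpace S]
    [T4Space S] {μ : Measure G} [IsFiniteMeasure μ] [NeZero μ] {x y : C(G, S)}
    (h : ∀ f : C(S, ℂ), ∫ u, f (x u) ∂μ = ∫ u, f (y u) ∂μ) : ∃ u v, x u = y v := by
  by_contra! hxy
  have hdisj : Disjoint (Set.range x) (Set.range y) := by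
    rw [Set.disjoint_left]
    rintro _ ⟨u, rfl⟩ ⟨v, hv⟩
    exact hxy u v hv.symm
  obtain ⟨f, hf0, hf1, -⟩ := exists_continuous_zero_one_of_isClosed
    (isCompact_range x.continuous).isClosed (isCompact_range y.continuous).isClosed hdisj
  have hf := h ⟨fun s => (f s : ℂ), by fun_prop⟩
  have hμ : (0 : ℂ) = μ.real Set.univ := by simpa [hf0 ⟨_, rfl⟩, hf1 ⟨_, rfl⟩] using hf
  exact measureReal_univ_ne_zero (μ := μ) (by exact_mod_cast hμ.symm)

theorem exists_apply_eq_of_integral_eval_eq {σ : Type*} [BorelSpace G]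
    {μ : Measure G} [IsFiniteMeasure μ] [NeZero μ] {x y : G → σ → ℂ} (hx : Continuous x)
    (hy : Continuous y) {τ : σ → σ} (hxτ : ∀ u p, star (x u p) = x u (τ p))
    (hyτ : ∀ u p, star (y u p) = y u (τ p))
    (h : ∀ f : MvPolynomial σ ℂ, ∫ u, eval (x u) f ∂μ = ∫ u, eval (y u) f ∂μ) :
    ∃ u v, x u = y v := by
  let S : Set (σ → ℂ) := Set.range x ∪ Set.range y
  have : CompactSpace S :=
    isCompact_iff_compactSpace.mp ((isCompact_range hx).union (isCompact_range hy))
  let x' : C(G, S) := ⟨fun u => ⟨x u, .inl ⟨u, rfl⟩⟩, by fun_prop⟩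
  let y' : C(G, S) := ⟨fun u => ⟨y u, .inr ⟨u, rfl⟩⟩, by fun_prop⟩
  let c : σ → C(S, ℂ) := fun p =>
    ⟨fun s => s.1 p, (continuous_apply p).comp continuous_subtype_val⟩
  have hdense : DenseRange (aeval c : MvPolynomial σ ℂ → C(S, ℂ)) := by
    refine denseRange_aeval_of_separatesPoints (fun p => ⟨τ p, ?_⟩) fun s t hst =>
      Subtype.ext (funext hst)
    ext ⟨_, ⟨u, rfl⟩ | ⟨u, rfl⟩⟩
    exacts [(hxτ u p).symm, (hyτ u p).symm]
  have haeval (f : MvPolynomial σ ℂ) (s : S) : aeval c f s = eval s.1 f :=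
    comp_aeval_apply _ (ContinuousMap.evalAlgHom ℂ ℂ s) f
  have hint : (fun f : C(S, ℂ) => ∫ u, f (x' u) ∂μ) = fun f => ∫ u, f (y' u) ∂μ :=
    hdense.equalizer ((continuous_integral_continuousMap μ).comp x'.continuous_precomp)
      ((continuous_integral_continuousMap μ).comp y'.continuous_precomp) <|
      funext fun f => by
        simp only [Function.comp_apply, haeval]
        exact h f
  obtain ⟨u, v, huv⟩ := exists_apply_eq_of_integral_comp_eq (congrFun hint)
  exact ⟨u, v, congrArg Subtype.val huv⟩

end Moments

section ZariskiDensity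

open MvPolynomial

theorem eval_eval_eq_zero_of_infinite {σ τ R : Type*} [CommRing R] [IsDomain R]
    {f : MvPolynomial σ R} {φ : σ → MvPolynomial τ R} {s : τ → Set R} (hs : ∀ i, (s i).Infinite)
    (h : ∀ z ∈ Set.univ.pi s, eval (fun p => eval z (φ p)) f = 0) (z : τ → R) :
    eval (fun p => eval z (φ p)) f = 0 := by
  have heval (z : τ → R) : eval z (bind₁ φ f) = eval (fun p => eval z (φ p)) f := by
    simpa only [aeval_eq_eval] using aeval_bind₁ z φ f
  have hzero : bind₁ φ f = 0 := funext_set s hs fun z hz => by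
    rw [heval, h z hz, map_zero]
  rw [← heval, hzero, map_zero]

theorem infinite_unitary_complex : (unitary ℂ : Set ℂ).Infinite := by
  have hsphere : (unitary ℂ : Set ℂ) = Metric.sphere 0 1 := by
    ext z
    rw [SetLike.mem_coe, Unitary.mem_iff_star_mul_self, mem_sphere_zero_iff_norm,
      Complex.star_def, ← Complex.normSq_eq_conj_mul_self, Complex.ofReal_eq_one,
      Complex.normSq_eq_norm_sq, pow_eq_one_iff_of_nonneg (norm_nonneg z) two_ne_zero]
  rw [hsphere]
  refine (isPreconnected_sphere (by simp) 0 1).infinite_of_nontrivial ⟨1, ?_, -1, ?_, ?_⟩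
  · simp
  · simp
  · norm_num

theorem diagonal_mem_unitaryGroup {n : Type*} [Fintype n] [DecidableEq n] {z : n → ℂ}
    (hz : ∀ k, z k ∈ unitary ℂ) : diagonal z ∈ unitaryGroup n ℂ := by
  rw [mem_unitaryGroup_iff, star_eq_conjTranspose, diagonal_conjTranspose, diagonal_mul_diagonal]
  exact diagonal_eq_one.mpr (_root_.funext fun k => Unitary.mul_star_self_of_mem (hz k))

variable {ι : Type*} {J : ι → Type*}

/-- The matrix entries of a tuple of local operators, as a point at which polynomials in these
entries are evaluated. -/
def localEntries {R : Type*} (u : ∀ i, Matrix (J i) (J i) R) : (Σ i, J i × J i) → R :=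
  fun p => u p.1 p.2.1 p.2.2

theorem eval_eq_zero_of_isHermitian [∀ i, Fintype (J i)] [∀ i, DecidableEq (J i)]
    {f : MvPolynomial (Σ i, J i × J i) ℂ}
    (hf : ∀ u : ∀ i, Matrix (J i) (J i) ℂ, (∀ i, u i ∈ unitaryGroup (J i) ℂ) →
      eval (localEntries u) f = 0)
    {A : ∀ i, Matrix (J i) (J i) ℂ} (hA : ∀ i, (A i).IsHermitian) :
    eval (localEntries A) f = 0 := by
  let U i : unitaryGroup (J i) ℂ := (hA i).eigenvectorUnitary
  let D (z : (Σ i, J i) → ℂ) i : Matrix (J i) (J i) ℂ :=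
    U i * diagonal (fun k => z ⟨i, k⟩) * star (U i : Matrix (J i) (J i) ℂ)
  let φ (p : Σ i, J i × J i) : MvPolynomial (Σ i, J i) ℂ :=
    ∑ k, C ((U p.1 : Matrix _ _ ℂ) p.2.1 k * star ((U p.1 : Matrix _ _ ℂ) p.2.2 k)) * X ⟨p.1, k⟩
  have hφ (z : (Σ i, J i) → ℂ) : (fun p => eval z (φ p)) = localEntries (D z) := by
    funext p
    simp only [φ, map_sum, map_mul, eval_C, eval_X, localEntries, D]
    rw [mul_apply]
    exact Finset.sum_congr rfl fun k _ => by rw [mul_diagonal, star_apply, mul_right_comm]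
  let eig (p : Σ i, J i) : ℂ := (hA p.1).eigenvalues p.2
  have hA_eq : localEntries A = fun p => eval eig (φ p) :=
    (congrArg localEntries (_root_.funext fun i => (hA i).spectral_theorem)).trans (hφ eig).symm
  rw [hA_eq]
  refine eval_eval_eq_zero_of_infinite (fun _ => infinite_unitary_complex) (fun z hz => ?_) _
  rw [hφ]
  exact hf (D z) fun i => mul_mem
    (mul_mem (U i).2 (diagonal_mem_unitaryGroup fun k => hz _ trivial)) (Unitary.star_mem (U i).2)

open ComplexStarModule in
theorem eq_zero_of_eval_unitary_eq_zero [∀ i, Fintype (J i)] [∀ i, DecidableEq (J i)]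
    {f : MvPolynomial (Σ i, J i × J i) ℂ}
    (hf : ∀ u : ∀ i, Matrix (J i) (J i) ℂ, (∀ i, u i ∈ unitaryGroup (J i) ℂ) →
      eval (localEntries u) f = 0) : f = 0 := by
  refine MvPolynomial.funext fun x => ?_
  let A i : Matrix (J i) (J i) ℂ := of fun a b => x ⟨i, a, b⟩
  let φ (p : Σ i, J i × J i) : MvPolynomial Unit ℂ :=
    C ((ℜ (A p.1) : Matrix _ _ ℂ) p.2.1 p.2.2) + C ((ℑ (A p.1) : Matrix _ _ ℂ) p.2.1 p.2.2) * X ()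
  have hx : x = fun p => eval (fun _ => Complex.I) (φ p) := by
    funext ⟨i, a, b⟩
    have := congrFun₂ (realPart_add_I_smul_imaginaryPart (A i)) a b
    simpa [A, φ, mul_comm] using this.symm
  rw [map_zero, hx]
  have hreal : (Set.range ((↑) : ℝ → ℂ)).Infinite :=
    Set.infinite_range_of_injective Complex.ofReal_injective
  refine eval_eval_eq_zero_of_infinite (fun _ => hreal) (fun z hz => ?_) _
  obtain ⟨t, ht⟩ := hz () trivial
  let B i : selfAdjoint (Matrix (J i) (J i) ℂ) := ℜ (A i) + t • ℑ (A i)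
  have hB : (fun p => eval z (φ p)) = localEntries fun i => (B i : Matrix (J i) (J i) ℂ) := by
    funext p
    simp [φ, B, localEntries, ← ht, mul_comm]
  rw [hB]
  exact eval_eq_zero_of_isHermitian hf fun i => (B i).2

end ZariskiDensity

section Polarization

open MvPolynomial

theorem exists_perm_comp_eq_of_card_fiber_eq {L X : Type*} [Fintype L] [DecidableEq X]
    {p q : L → X} (h : ∀ x, Fintype.card {c // p c = x} = Fintype.card {c // q c = x}) :
    ∃ σ : Equiv.Perm L, q ∘ σ = p := by
  let e x : {c // p c = x} ≃ {c // q c = x} := Fintype.equivOfCardEq (h x)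
  refine ⟨(Equiv.sigmaFiberEquiv p).symm.trans
    ((Equiv.sigmaCongrRight e).trans (Equiv.sigmaFiberEquiv q)), funext fun c => ?_⟩
  exact (e (p c) ⟨c, rfl⟩).2

variable {ι R : Type*} {J : ι → Type*} [CommSemiring R]

variable (R J) in
/-- The tuple of local operators whose entries are independent indeterminates. -/
noncomputable def genericLocal (i : ι) : Matrix (J i) (J i) (MvPolynomial (Σ i, J i × J i) R) :=
  of fun a b => X ⟨i, a, b⟩

theorem genericLocal_map_eval (u : ∀ i, Matrix (J i) (J i) R) (i : ι) :
    (genericLocal R J i).map (eval (localEntries u)) = u i := by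
  ext a b
  simp [genericLocal, localEntries]

variable {L : Type*} [Fintype ι] [Fintype L]

/-- The exponent of the monomial `∏ c, ∏ i, X ⟨i, a c i, b c i⟩`, which is the `(a, b)` entry of the
tensor power of `genericLocal`. -/
noncomputable def tensorExponent (a b : L → ∀ i, J i) : (Σ i, J i × J i) →₀ ℕ :=
  ∑ c, ∑ i, Finsupp.single ⟨i, a c i, b c i⟩ 1

theorem tensorExponent_apply [∀ i, DecidableEq (J i)] (a b : L → ∀ i, J i) (i : ι)
    (x : J i × J i) :
    tensorExponent a b ⟨i, x⟩ = Fintype.card {c // (a c i, b c i) = x} := by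
  classical
  simp only [tensorExponent, Finsupp.finsetSum_apply, Fintype.card_subtype, Finset.card_filter]
  refine Finset.sum_congr rfl fun c _ => ?_
  rw [Finset.sum_eq_single i (fun k _ hk => Finsupp.single_eq_of_ne fun h => hk (by cases h; rfl))
    (by simp)]
  simp [Finsupp.single_apply]

theorem exists_localPerm_eq_of_tensorExponent_eq {a b a' b' : L → ∀ i, J i}
    (h : tensorExponent a b = tensorExponent a' b') :
    ∃ g, localPerm L J g a = a' ∧ localPerm L J g b = b' := by
  classical
  have hperm (i) : ∃ σ : Equiv.Perm L, (fun c => (a' c i, b' c i)) ∘ σ = fun c => (a c i, b c i) :=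
    exists_perm_comp_eq_of_card_fiber_eq fun x => by
      rw [← tensorExponent_apply, ← tensorExponent_apply, h]
  choose σ hσ using hperm
  have hσ' (c i) : (a' c i, b' c i) = (a ((σ i)⁻¹ c) i, b ((σ i)⁻¹ c) i) := by
    simpa using congrFun (hσ i) ((σ i)⁻¹ c)
  exact ⟨σ, funext₂ fun c i => (congrArg Prod.fst (hσ' c i)).symm,
    funext₂ fun c i => (congrArg Prod.snd (hσ' c i)).symm⟩

variable [DecidableEq ι] [DecidableEq L] [∀ i, Fintype (J i)] [∀ i, DecidableEq (J i)]

theorem localTensorPower_genericLocal_apply (a b : L → ∀ i, J i) :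
    localTensorPower L (genericLocal R J) a b = monomial (tensorExponent a b) 1 := by
  simp only [localTensorPower_apply, piKronecker_apply, genericLocal, of_apply, tensorExponent,
    monomial_sum_one, X]

theorem exists_linearMap_localTensorPower_genericLocal
    {B : Matrix (L → ∀ i, J i) (L → ∀ i, J i) R}
    (hB : B ∈ Set.centralizer (Set.range (localPermMatrix L R J))) :
    ∃ Λ : MvPolynomial (Σ i, J i × J i) R →ₗ[R] R,
      (localTensorPower L (genericLocal R J)).map Λ = B := by
  let entry (ab : (L → ∀ i, J i) × (L → ∀ i, J i)) : R := B ab.1 ab.2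
  let exponent (ab : (L → ∀ i, J i) × (L → ∀ i, J i)) := tensorExponent ab.1 ab.2
  have hfactor : entry.FactorsThrough exponent := by
    rintro ⟨a, b⟩ ⟨a', b'⟩ h
    obtain ⟨g, rfl, rfl⟩ := exists_localPerm_eq_of_tensorExponent_eq h
    exact (commute_localPermMatrix_iff.mp (hB _ ⟨g, rfl⟩) a b).symm
  refine ⟨(basisMonomials _ R).constr R (Function.extend exponent entry 0), ?_⟩
  ext a b
  have hbasis : monomial (tensorExponent a b) (1 : R) =
      basisMonomials _ R (tensorExponent a b) := by
    rw [coe_basisMonomials]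
  rw [map_apply, localTensorPower_genericLocal_apply, hbasis, Module.Basis.constr_basis]
  exact hfactor.extend_apply 0 (a, b)

end Polarization

section SchurWeyl

open MvPolynomial

variable {ι L : Type*} [Fintype ι] [DecidableEq ι] [Fintype L] [DecidableEq L]
  {J : ι → Type*} [∀ i, Fintype (J i)] [∀ i, DecidableEq (J i)]

theorem commute_map_C_localTensorPower_genericLocal {A : Matrix (L → ∀ i, J i) (L → ∀ i, J i) ℂ}
    (hA : ∀ u : ∀ i, Matrix (J i) (J i) ℂ, (∀ i, u i ∈ unitaryGroup (J i) ℂ) →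
      Commute (localTensorPower L u) A) :
    Commute (localTensorPower L (genericLocal ℂ J)) (A.map C) := by
  refine Matrix.ext fun a b => sub_eq_zero.mp (eq_zero_of_eval_unitary_eq_zero fun u hu => ?_)
  have heval : (localTensorPower L (genericLocal ℂ J)).map (eval (localEntries u)) =
      localTensorPower L u := by
    rw [localTensorPower_map]
    simp only [genericLocal_map_eval]
  have hC : (A.map C).map (eval (localEntries u)) = A := by
    ext
    simp
  rw [map_sub, sub_eq_zero, ← map_apply (f := eval _), ← map_apply (f := eval _),
    Matrix.map_mul, Matrix.map_mul, heval, hC, (hA u hu).eq]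

/-- Schur–Weyl duality for the local unitary group. -/
theorem mem_span_range_localPermMatrix {A : Matrix (L → ∀ i, J i) (L → ∀ i, J i) ℂ}
    (hA : ∀ u : ∀ i, Matrix (J i) (J i) ℂ, (∀ i, u i ∈ unitaryGroup (J i) ℂ) →
      Commute (localTensorPower L u) A) :
    A ∈ Submodule.span ℂ (Set.range (localPermMatrix L ℂ J)) := by
  refine matrix_mem_span_range_of_mem_centralizer_centralizer _ fun B hB => ?_
  obtain ⟨Λ, rfl⟩ := exists_linearMap_localTensorPower_genericLocal hB
  have hcomm := commute_map_C_localTensorPower_genericLocal hA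
  ext a b
  have h := congrArg Λ (congrFun₂ hcomm.eq a b)
  simpa [mul_apply, mul_comm _ (C _), ← smul_eq_C_mul, mul_comm] using h

end SchurWeyl

section UnitaryMoments

open MeasureTheory MvPolynomial
open scoped Matrix.Norms.L2Operator

instance instCompactSpaceUnitaryGroup {n 𝕜 : Type*} [Fintype n] [DecidableEq n] [RCLike 𝕜] :
    CompactSpace (unitaryGroup n 𝕜) :=
  isCompact_iff_compactSpace.mp <| .of_isClosed_subset
    (isCompact_univ_pi fun _ => isCompact_univ_pi fun _ => isCompact_closedBall (0 : 𝕜) 1)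
    isClosed_unitary fun u hu i _ j _ => by
      simpa using entry_norm_bound_of_unitary hu i j

variable {ι κ L : Type*} [Fintype ι] [DecidableEq ι] [Fintype L] [DecidableEq L]
  {J : ι → Type*} [∀ i, Fintype (J i)] [∀ i, DecidableEq (J i)]

variable (L) in
/-- The restriction of `localTensorPower` to the local unitary group. -/
def unitaryTensorPower :
    (∀ i, unitaryGroup (J i) ℂ) →* Matrix (L → ∀ i, J i) (L → ∀ i, J i) ℂ :=
  (localTensorPower L).comp (MonoidHom.piMap fun i => (unitaryGroup (J i) ℂ).subtype)

theorem continuous_unitaryTensorPower : Continuous (unitaryTensorPower L (J := J)) :=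
  continuous_piKronecker.comp <| continuous_pi fun _ => continuous_piKronecker.comp <|
    continuous_pi fun i => continuous_subtype_val.comp (continuous_apply i)

/-- The conjugate `u⁻¹ X u` of a tuple of matrices by a local unitary `u`. -/
def localUnitaryConj {R : Type*} [CommRing R] [StarRing R]
    (X : κ → Matrix (∀ i, J i) (∀ i, J i) R) (u : ∀ i, unitaryGroup (J i) R) (j : κ) :
    Matrix (∀ i, J i) (∀ i, J i) R :=
  (piKronecker fun i => (u i : Matrix (J i) (J i) R))ᴴ * X j *
    piKronecker fun i => (u i : Matrix (J i) (J i) R)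

theorem eval_monomial_eq_prod_get {σ R : Type*} [CommSemiring R] (x : σ → R) (e : σ →₀ ℕ)
    (a : R) : eval x (monomial e a) = a * ∏ c, x (e.toMultiset.toList.get c) := by
  simp only [List.get_eq_getElem, Fin.prod_univ_fun_getElem, Multiset.prod_map_toList,
    Finsupp.toMultiset_map, Finsupp.prod_toMultiset, eval_monomial]
  rw [Finsupp.prod_mapDomain_index (fun _ => pow_zero _) fun _ _ _ => pow_add _ _ _]

/-- The matrix entries of a tuple, as a point at which polynomials can be evaluated. -/
def tupleEntries {T R : Type*} (X : κ → Matrix T T R) (p : κ × T × T) : R := X p.1 p.2.1 p.2.2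

theorem continuous_tupleEntries_localUnitaryConj (X : κ → Matrix (∀ i, J i) (∀ i, J i) ℂ) :
    Continuous fun u => tupleEntries (localUnitaryConj X u) := by
  have hK : Continuous fun u : ∀ i, unitaryGroup (J i) ℂ =>
      piKronecker fun i => (u i : Matrix (J i) (J i) ℂ) :=
    continuous_piKronecker.comp <|
      continuous_pi fun i => continuous_subtype_val.comp (continuous_apply i)
  exact continuous_pi fun p =>
    ((hK.matrix_conjTranspose.mul continuous_const).mul hK).matrix_elem _ _

theorem star_tupleEntries_localUnitaryConj {X : κ → Matrix (∀ i, J i) (∀ i, J i) ℂ}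
    (hX : ∀ j, (X j).IsHermitian) (u : ∀ i, unitaryGroup (J i) ℂ)
    (p : κ × (∀ i, J i) × (∀ i, J i)) :
    star (tupleEntries (localUnitaryConj X u) p) =
      tupleEntries (localUnitaryConj X u) (p.1, p.2.swap) :=
  (isHermitian_conjTranspose_mul_mul _ (hX p.1)).apply _ _

theorem prod_localUnitaryConj_apply (P : L → κ) (s t : L → ∀ i, J i)
    (X : κ → Matrix (∀ i, J i) (∀ i, J i) ℂ) (u : ∀ i, unitaryGroup (J i) ℂ) :
    ∏ c, localUnitaryConj X u (P c) (s c) (t c) =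
      trace (piKronecker (fun c => X (P c)) *
        (unitaryTensorPower L u * single t s 1 * unitaryTensorPower L u⁻¹)) := by
  have hsplit : piKronecker (fun c => localUnitaryConj X u (P c)) =
      unitaryTensorPower L u⁻¹ * piKronecker (fun c => X (P c)) * unitaryTensorPower L u := by
    simp only [localUnitaryConj, piKronecker_conjTranspose]
    exact (piKronecker_mul _ _).trans (congrArg (· * _) (piKronecker_mul _ _))
  calc ∏ c, localUnitaryConj X u (P c) (s c) (t c)
      = piKronecker (fun c => localUnitaryConj X u (P c)) s t := rfl
    _ = trace (piKronecker (fun c => localUnitaryConj X u (P c)) * single t s 1) := by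
        simp [trace_mul_single]
    _ = _ := by
        rw [hsplit, mul_assoc, mul_assoc, trace_mul_comm]
        simp only [mul_assoc]

variable [MeasurableSpace (∀ i, unitaryGroup (J i) ℂ)] [BorelSpace (∀ i, unitaryGroup (J i) ℂ)]
  {μ : Measure (∀ i, unitaryGroup (J i) ℂ)} [IsFiniteMeasure μ]

theorem integral_prod_localUnitaryConj (P : L → κ) (s t : L → ∀ i, J i)
    (X : κ → Matrix (∀ i, J i) (∀ i, J i) ℂ) :
    ∫ u, ∏ c, localUnitaryConj X u (P c) (s c) (t c) ∂μ =
      trace (piKronecker (fun c => X (P c)) *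
        ∫ u, unitaryTensorPower L u * single t s 1 * unitaryTensorPower L u⁻¹ ∂μ) := by
  have hint : Integrable (fun u : ∀ i, unitaryGroup (J i) ℂ =>
      unitaryTensorPower L u * single t s 1 * unitaryTensorPower L u⁻¹) μ :=
    have := continuous_unitaryTensorPower (L := L) (J := J)
    Continuous.integrable_of_hasCompactSupport (by fun_prop) (.of_compactSpace _)
  let φ : Matrix (L → ∀ i, J i) (L → ∀ i, J i) ℂ →ₗ[ℂ] ℂ :=
    traceLinearMap _ ℂ ℂ ∘ₗ LinearMap.mulLeft ℂ (piKronecker fun c => X (P c))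
  simp only [prod_localUnitaryConj_apply]
  exact φ.toContinuousLinearMap.integral_comp_comm hint

theorem integral_conj_mem_span_range_localPermMatrix [μ.IsMulLeftInvariant]
    (A : Matrix (L → ∀ i, J i) (L → ∀ i, J i) ℂ) :
    ∫ u, unitaryTensorPower L u * A * unitaryTensorPower L u⁻¹ ∂μ ∈
      Submodule.span ℂ (Set.range (localPermMatrix L ℂ J)) :=
  mem_span_range_localPermMatrix fun v hv =>
    commute_integral_conj (ρ := unitaryTensorPower L) continuous_unitaryTensorPower A
      (show ∀ i, unitaryGroup (J i) ℂ from fun i => ⟨v i, hv i⟩)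

theorem integral_prod_localUnitaryConj_eq [μ.IsMulLeftInvariant] {P : L → κ}
    {X Y : κ → Matrix (∀ i, J i) (∀ i, J i) ℂ}
    (h : ∀ σ, traceMonomial P σ X = traceMonomial P σ Y) (s t : L → ∀ i, J i) :
    ∫ u, ∏ c, localUnitaryConj X u (P c) (s c) (t c) ∂μ =
      ∫ u, ∏ c, localUnitaryConj Y u (P c) (s c) (t c) ∂μ := by
  let φ (Z : κ → Matrix (∀ i, J i) (∀ i, J i) ℂ) :
      Matrix (L → ∀ i, J i) (L → ∀ i, J i) ℂ →ₗ[ℂ] ℂ :=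
    traceLinearMap _ ℂ ℂ ∘ₗ LinearMap.mulLeft ℂ (piKronecker fun c => Z (P c))
  have hφ : Set.EqOn (φ X) (φ Y) (Set.range (localPermMatrix L ℂ J)) := by
    rintro _ ⟨σ, rfl⟩
    have hσ := h σ⁻¹
    rwa [traceMonomial_eq_trace, traceMonomial_eq_trace, inv_inv] at hσ
  rw [integral_prod_localUnitaryConj, integral_prod_localUnitaryConj]
  exact LinearMap.eqOn_span hφ (integral_conj_mem_span_range_localPermMatrix _)

theorem integral_eval_localUnitaryConj_eq [μ.IsMulLeftInvariant]
    {X Y : κ → Matrix (∀ i, J i) (∀ i, J i) ℂ}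
    (h : ∀ (ℓ : ℕ) (P : Fin ℓ → κ) (σ : ι → Equiv.Perm (Fin ℓ)),
      traceMonomial P σ X = traceMonomial P σ Y)
    (f : MvPolynomial (κ × (∀ i, J i) × (∀ i, J i)) ℂ) :
    ∫ u, eval (tupleEntries (localUnitaryConj X u)) f ∂μ =
      ∫ u, eval (tupleEntries (localUnitaryConj Y u)) f ∂μ := by
  have hint (Z : κ → Matrix (∀ i, J i) (∀ i, J i) ℂ)
      (f : MvPolynomial (κ × (∀ i, J i) × (∀ i, J i)) ℂ) :
      Integrable (fun u => eval (tupleEntries (localUnitaryConj Z u)) f) μ :=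
    Continuous.integrable_of_hasCompactSupport
      ((MvPolynomial.continuous_eval f).comp (continuous_tupleEntries_localUnitaryConj Z))
      (.of_compactSpace _)
  induction f using MvPolynomial.induction_on' with
  | monomial e a =>
    simp only [eval_monomial_eq_prod_get, integral_const_mul]
    exact congrArg (a * ·) (integral_prod_localUnitaryConj_eq (h _ _) _ _)
  | add f g hf hg =>
    simp only [map_add]
    rw [integral_add (hint _ _) (hint _ _), integral_add (hint _ _) (hint _ _), hf, hg]

end UnitaryMoments

section Invariants

open MeasureTheory MvPolynomial

variable {ι κ L R : Type*} [Fintype ι] [DecidableEq ι] [Fintype L] [DecidableEq L] [CommRing R]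
  {J : ι → Type*} [∀ i, Fintype (J i)]

/-- The trace monomial `Tr^P_σ` as a polynomial in the matrix entries. -/
noncomputable def traceMonomialPolynomial (P : L → κ) (σ : ι → Equiv.Perm L) :
    MvPolynomial (κ × (∀ i, J i) × (∀ i, J i)) R :=
  traceMonomial P σ fun j => of fun a b => X (j, a, b)

theorem eval_traceMonomialPolynomial (P : L → κ) (σ : ι → Equiv.Perm L)
    (X : κ → Matrix (∀ i, J i) (∀ i, J i) R) :
    eval (tupleEntries X) (traceMonomialPolynomial P σ) = traceMonomial P σ X := by
  simp [traceMonomialPolynomial, traceMonomial, tupleEntries]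

variable [∀ i, DecidableEq (J i)]

/-- Invariance of a polynomial function of the entries of a tuple of matrices under simultaneous
conjugation by `⨂ᵢ gᵢ` with all `gᵢ` invertible. -/
def IsLocalGLInvariant (f : MvPolynomial (κ × (∀ i, J i) × (∀ i, J i)) R) : Prop :=
  ∀ g : ∀ i, Matrix (J i) (J i) R, (∀ i, IsUnit (g i)) →
    ∀ X : κ → Matrix (∀ i, J i) (∀ i, J i) R,
      eval (tupleEntries fun j => piKronecker g * X j * (piKronecker g)⁻¹) f =
        eval (tupleEntries X) f

theorem isLocalGLInvariant_traceMonomialPolynomial (P : L → κ) (σ : ι → Equiv.Perm L) :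
    IsLocalGLInvariant (traceMonomialPolynomial (R := R) (J := J) P σ) := fun g hg X => by
  rw [eval_traceMonomialPolynomial, eval_traceMonomialPolynomial, traceMonomial_conj P σ hg]

variable [StarRing R]

/-- Local unitary equivalence of tuples of operators on a composite system: the tuples are
simultaneously conjugate by some `⨂ᵢ uᵢ` with all `uᵢ` unitary. -/
def LocalUnitaryEquiv (M N : κ → Matrix (∀ i, J i) (∀ i, J i) R) : Prop :=
  ∃ u : ∀ i, Matrix (J i) (J i) R, (∀ i, u i ∈ unitaryGroup (J i) R) ∧
    ∀ j, N j = piKronecker u * M j * (piKronecker u)ᴴ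

theorem LocalUnitaryEquiv.eval_eq {M N : κ → Matrix (∀ i, J i) (∀ i, J i) R}
    (h : LocalUnitaryEquiv M N) {f : MvPolynomial (κ × (∀ i, J i) × (∀ i, J i)) R}
    (hf : IsLocalGLInvariant f) : eval (tupleEntries M) f = eval (tupleEntries N) f := by
  obtain ⟨u, hu, hN⟩ := h
  have hinv : (piKronecker u)⁻¹ = (piKronecker u)ᴴ :=
    inv_eq_right_inv (piKronecker_mem_unitaryGroup hu).2
  rw [← hf u (fun i => (Unitary.toUnits ⟨u i, hu i⟩).isUnit) M, hinv, ← funext hN]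

theorem localUnitaryEquiv_of_localUnitaryConj_eq {M N : κ → Matrix (∀ i, J i) (∀ i, J i) R}
    {u v : ∀ i, unitaryGroup (J i) R} (h : localUnitaryConj M u = localUnitaryConj N v) :
    LocalUnitaryEquiv M N := by
  let U : Matrix (∀ i, J i) (∀ i, J i) R := piKronecker fun i => (u i).1
  let V : Matrix (∀ i, J i) (∀ i, J i) R := piKronecker fun i => (v i).1
  have hV : V * Vᴴ = 1 := (piKronecker_mem_unitaryGroup fun i => (v i).2).2
  have hVU : piKronecker (fun i => (v i * (u i)⁻¹ : unitaryGroup (J i) R).1) = V * Uᴴ := by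
    rw [piKronecker_conjTranspose]
    exact piKronecker_mul _ _
  refine ⟨fun i => (v i * (u i)⁻¹ : unitaryGroup (J i) R), fun i => Subtype.prop _, fun j => ?_⟩
  have hj : Uᴴ * M j * U = Vᴴ * N j * V := congrFun h j
  calc N j = V * Vᴴ * N j * (V * Vᴴ) := by rw [hV, one_mul, mul_one]
    _ = V * (Vᴴ * N j * V) * Vᴴ := by simp only [mul_assoc]
    _ = V * Uᴴ * M j * (V * Uᴴ)ᴴ := by
      rw [← hj, conjTranspose_mul, conjTranspose_conjTranspose]
      simp only [mul_assoc]
    _ = _ := by rw [hVU]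

theorem localUnitaryEquiv_of_traceMonomial_eq {M N : κ → Matrix (∀ i, J i) (∀ i, J i) ℂ}
    (hM : ∀ j, (M j).IsHermitian) (hN : ∀ j, (N j).IsHermitian)
    (h : ∀ (ℓ : ℕ) (P : Fin ℓ → κ) (σ : ι → Equiv.Perm (Fin ℓ)),
      traceMonomial P σ M = traceMonomial P σ N) : LocalUnitaryEquiv M N := by
  let : MeasurableSpace (∀ i, unitaryGroup (J i) ℂ) := borel _
  have : BorelSpace (∀ i, unitaryGroup (J i) ℂ) := ⟨rfl⟩
  obtain ⟨u, v, huv⟩ := exists_apply_eq_of_integral_eval_eq (μ := Measure.haar)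
    (continuous_tupleEntries_localUnitaryConj M) (continuous_tupleEntries_localUnitaryConj N)
    (star_tupleEntries_localUnitaryConj hM) (star_tupleEntries_localUnitaryConj hN)
    (integral_eval_localUnitaryConj_eq h)
  refine localUnitaryEquiv_of_localUnitaryConj_eq (u := u) (v := v) (funext fun j => ?_)
  exact Matrix.ext fun a b => congrFun huv (j, a, b)

theorem stmt_14_general {M N : κ → Matrix (∀ i, J i) (∀ i, J i) ℂ}
    (hM : ∀ j, (M j).IsHermitian) (hN : ∀ j, (N j).IsHermitian) :
    (LocalUnitaryEquiv M N ↔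
      ∀ f, IsLocalGLInvariant f → eval (tupleEntries M) f = eval (tupleEntries N) f) ∧
    (LocalUnitaryEquiv M N ↔
      ∀ (ℓ : ℕ) (P : Fin ℓ → κ) (σ : ι → Equiv.Perm (Fin ℓ)),
        traceMonomial P σ M = traceMonomial P σ N) := by
  have htrace (h : ∀ f, IsLocalGLInvariant f → eval (tupleEntries M) f = eval (tupleEntries N) f)
      (ℓ : ℕ) (P : Fin ℓ → κ) (σ : ι → Equiv.Perm (Fin ℓ)) :
      traceMonomial P σ M = traceMonomial P σ N := by
    simpa only [eval_traceMonomialPolynomial] using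
      h _ (isLocalGLInvariant_traceMonomialPolynomial P σ)
  have hequiv := localUnitaryEquiv_of_traceMonomial_eq hM hN
  exact ⟨⟨fun h f hf => h.eval_eq hf, fun h => hequiv (htrace h)⟩,
    ⟨fun h => htrace fun f hf => h.eval_eq hf, hequiv⟩⟩

end Invariants

/-- Two `m`-tuples of density operators on `V₁⊗⋯⊗Vₙ` are in the same local
unitary orbit iff all polynomial invariants of the local GL-conjugation action agree on
them; equivalently, iff the trace monomials `Tr^P_σ` all agree on them. -/
theorem stmt_14 {n m : ℕ} (d : Fin n → ℕ)
    (M N : Fin m → Matrix (∀ i, Fin (d i)) (∀ i, Fin (d i)) ℂ)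
    (hM : ∀ j, (M j).PosSemidef ∧ (M j).trace = 1)
    (hN : ∀ j, (N j).PosSemidef ∧ (N j).trace = 1) :
    ((∃ u : ∀ i, Matrix (Fin (d i)) (Fin (d i)) ℂ,
        (∀ i, u i ∈ Matrix.unitaryGroup (Fin (d i)) ℂ) ∧
        ∀ j, N j = kron u * M j * (kron u)ᴴ) ↔
      (∀ f : MvPolynomial (Fin m × (∀ i, Fin (d i)) × (∀ i, Fin (d i))) ℂ,
        (∀ g : ∀ i, Matrix (Fin (d i)) (Fin (d i)) ℂ, (∀ i, IsUnit (g i)) →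
          ∀ X : Fin m → Matrix (∀ i, Fin (d i)) (∀ i, Fin (d i)) ℂ,
            MvPolynomial.eval (fun p => (kron g * X p.1 * (kron g)⁻¹) p.2.1 p.2.2) f =
              MvPolynomial.eval (fun p => X p.1 p.2.1 p.2.2) f) →
        MvPolynomial.eval (fun p => M p.1 p.2.1 p.2.2) f =
          MvPolynomial.eval (fun p => N p.1 p.2.1 p.2.2) f)) ∧
    ((∃ u : ∀ i, Matrix (Fin (d i)) (Fin (d i)) ℂ,
        (∀ i, u i ∈ Matrix.unitaryGroup (Fin (d i)) ℂ) ∧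
        ∀ j, N j = kron u * M j * (kron u)ᴴ) ↔
      (∀ (ℓ : ℕ) (P : Fin ℓ → Fin m) (σ : Fin n → Equiv.Perm (Fin ℓ)),
        trMonP P σ M = trMonP P σ N)) :=
  stmt_14_general (fun j => (hM j).1.isHermitian) fun j => (hN j).1.isHermitian
end
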